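/- For every natural number n, the F₂-vector space dimension of the n-th Hochschild homology of A(1) is: dim HH_n(A(1), A(1)) = 2n + 5 if n is even, 2n + 6 if n ≡ 1 (mod 4), and 2n + 4 if n ≡ 3 (mod 4). -/

import Mathlib

open TensorProduct MulOpposite CategoryTheory

section Machinery

variable (k : Type) [CommRing k] (S : Type) [Ring S] [Algebra k S] (P : Set (S × S))

/-- The `k`-submodule of (the restriction of scalars of) an `S`-module `N` generated by all
differences `p.1 • n - p.2 • n` for pairs `p ∈ P` and `n ∈ N`. -/
noncomputable def relSub (N : ModuleCat S) :
    Submodule k ((ModuleCat.restrictScalars (algebraMap k S)).obj N) :=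
  Submodule.span k {x | ∃ p ∈ P, ∃ n : N, x = p.1 • n - p.2 • n}

/-- The "coinvariants"-type additive functor sending an `S`-module `N` to its quotient,
as a `k`-module, by the span of all elements `p.1 • n - p.2 • n` for `p ∈ P`, `n ∈ N`. -/
noncomputable def coinvFunctor : ModuleCat S ⥤ ModuleCat k where
  obj N := ModuleCat.of k (((ModuleCat.restrictScalars (algebraMap k S)).obj N) ⧸ relSub k S P N)
  map {N N'} f := ModuleCat.ofHom <| Submodule.mapQ (relSub k S P N) (relSub k S P N')
      ((ModuleCat.restrictScalars (algebraMap k S)).map f).hom (by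
    rw [relSub, Submodule.span_le]
    rintro x ⟨p, hp, n, rfl⟩
    have : ((ModuleCat.restrictScalars (algebraMap k S)).map f).hom (p.1 • n - p.2 • n)
        = p.1 • (f n) - p.2 • (f n) := by
      show f (p.1 • n - p.2 • n) = _
      rw [map_sub, f.hom.map_smul, f.hom.map_smul]
    refine SetLike.mem_coe.2 (Submodule.mem_comap.2 (Eq.mpr (congrArg (· ∈ relSub k S P N') this) ?_))
    exact Submodule.subset_span ⟨p, hp, f n, rfl⟩)
  map_id _ := ModuleCat.hom_ext (Submodule.linearMap_qext _ (LinearMap.ext fun _ => rfl))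
  map_comp _ _ := ModuleCat.hom_ext (Submodule.linearMap_qext _ (LinearMap.ext fun _ => rfl))

instance : (coinvFunctor k S P).Additive where
  map_add := ModuleCat.hom_ext (Submodule.linearMap_qext _ (LinearMap.ext fun _ => rfl))

end Machinery

/-- Hochschild homology `HH_n(A, A)` of a `k`-algebra `A`: the `n`-th left derived functor
(that is, `Tor_n` over the enveloping algebra `A ⊗[k] Aᵐᵒᵖ`) of the coinvariants functor
`N ↦ N / span { a•n - n•a }` (which is naturally isomorphic to `A ⊗_{A ⊗[k] Aᵐᵒᵖ} -`),
evaluated at the `A`-bimodule `A` itself. -/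
noncomputable def HochschildHomology (k : Type) [CommRing k] (A : Type) [Ring A] [Algebra k A]
    (n : ℕ) : ModuleCat k :=
  letI : Module (A ⊗[k] Aᵐᵒᵖ) A := TensorProduct.Algebra.module
  ((coinvFunctor k (A ⊗[k] Aᵐᵒᵖ)
      {p | ∃ a : A, p = (a ⊗ₜ[k] (1 : Aᵐᵒᵖ), (1 : A) ⊗ₜ[k] op a)}).leftDerived n).obj
    (ModuleCat.of (A ⊗[k] Aᵐᵒᵖ) A)

/-- The relations defining `A(1)`: `Sq¹·Sq¹ = 0` and `Sq²·Sq² + Sq¹·Sq²·Sq¹ = 0`. -/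
inductive A1Rel : FreeAlgebra (ZMod 2) (Fin 2) → FreeAlgebra (ZMod 2) (Fin 2) → Prop
  | sq1 : A1Rel (FreeAlgebra.ι (ZMod 2) 0 * FreeAlgebra.ι (ZMod 2) 0) 0
  | sq2 : A1Rel (FreeAlgebra.ι (ZMod 2) 1 * FreeAlgebra.ι (ZMod 2) 1 +
      FreeAlgebra.ι (ZMod 2) 0 * FreeAlgebra.ι (ZMod 2) 1 * FreeAlgebra.ι (ZMod 2) 0) 0

/-- `A(1)`, the subalgebra of the mod 2 Steenrod algebra generated by `Sq¹` and `Sq²`, presented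
as the quotient of the free `F₂`-algebra on two generators `Sq1, Sq2` by the two-sided ideal
generated by `Sq1·Sq1` and `Sq2·Sq2 + Sq1·Sq2·Sq1`. -/
abbrev A1 : Type := RingQuot A1Rel

/-- The image of `Sq¹` in `A(1)`. -/
noncomputable def Sq1 : A1 := RingQuot.mkAlgHom (ZMod 2) A1Rel (FreeAlgebra.ι (ZMod 2) 0)

/-- The image of `Sq²` in `A(1)`. -/
noncomputable def Sq2 : A1 := RingQuot.mkAlgHom (ZMod 2) A1Rel (FreeAlgebra.ι (ZMod 2) 1)

/-- Milnor's element `Q₀ = Sq¹·Sq² + Sq²·Sq¹` in `A(1)`. -/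
noncomputable def Q0 : A1 := Sq1 * Sq2 + Sq2 * Sq1

/-! `A(1)` is a Hopf algebra, so along the composite `adjointHom` of the coproduct with the antipode
its enveloping algebra is a free right `A(1)`-module, and extending scalars along it takes a
resolution of the trivial module `F₂` to one of the bimodule `A(1)`. Hence `HH_n(A(1), A(1))` is
`Tor_n` over `A(1)` of the adjoint representation with `F₂`. The trivial module has a free
resolution `A1Terms` whose ranks grow by two every four degrees. On the adjoint representation `Sq²`
annihilates the image of `Sq¹`, so the differentials become block diagonal, and their ranks are sums
of the ranks `2` and `3` of `Sq¹` and `Sq²`. -/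

section LinearComplex

variable {R : Type} [Ring R] (X : ℕ → Type) [∀ n, AddCommGroup (X n)] [∀ n, Module R (X n)]
  (d : ∀ n, X (n + 1) →ₗ[R] X n) (d_comp_d : ∀ n, d n ∘ₗ d (n + 1) = 0)

/-- The chain complex of modules with terms `X n` and differentials `d n`. -/
noncomputable def linearComplex : ChainComplex (ModuleCat R) ℕ :=
  ChainComplex.of (fun n => ModuleCat.of R (X n)) (fun n => ModuleCat.ofHom (d n))
    fun n => ModuleCat.hom_ext (d_comp_d n)

lemma linearComplex_d (n : ℕ) :
    (linearComplex X d d_comp_d).d (n + 1) n = ModuleCat.ofHom (d n) :=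
  ChainComplex.of_d (fun n => ModuleCat.of R (X n)) (fun n => ModuleCat.ofHom (d n)) n

lemma coe_linearComplex_d (n : ℕ) : ⇑((linearComplex X d d_comp_d).d (n + 1) n).hom = ⇑(d n) :=
  congrArg (fun f => ⇑(ModuleCat.Hom.hom f)) (linearComplex_d X d d_comp_d n)

end LinearComplex

section Resolution

variable {R : Type} [Ring R] {X : ℕ → Type} [∀ n, AddCommGroup (X n)] [∀ n, Module R (X n)]
  {M : Type} [AddCommGroup M] [Module R M]

/-- The differentials `d` and the augmentation `ε` form a resolution
`⋯ → X 2 → X 1 → X 0 → M → 0`. -/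
structure IsResolution (d : ∀ n, X (n + 1) →ₗ[R] X n) (ε : X 0 →ₗ[R] M) : Prop where
  surjective : Function.Surjective ε
  exact_zero : Function.Exact (d 0) ε
  exact_succ (n : ℕ) : Function.Exact (d (n + 1)) (d n)

namespace IsResolution

variable {d : ∀ n, X (n + 1) →ₗ[R] X n} {ε : X 0 →ₗ[R] M}

lemma d_comp_d (h : IsResolution d ε) (n : ℕ) : d n ∘ₗ d (n + 1) = 0 :=
  (h.exact_succ n).linearMap_comp_eq_zero

variable (h : IsResolution d ε)

/-- The augmentation of a resolution as a map of complexes onto `M` in degree `0`. -/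
noncomputable def augmentation :
    linearComplex X d h.d_comp_d ⟶ (ChainComplex.single₀ (ModuleCat R)).obj (ModuleCat.of R M) :=
  (ChainComplex.toSingle₀Equiv _ _).symm ⟨ModuleCat.ofHom ε, by
    rw [linearComplex_d]
    exact ModuleCat.hom_ext h.exact_zero.linearMap_comp_eq_zero⟩

lemma augmentation_quasiIso : QuasiIso h.augmentation where
  quasiIsoAt
    | 0 => by
      rw [ChainComplex.quasiIsoAt₀_iff, ShortComplex.quasiIso_iff_of_zeros' _ rfl rfl rfl]
      refine ⟨?_, (ModuleCat.epi_iff_surjective _).2 h.surjective⟩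
      rw [ShortComplex.ShortExact.moduleCat_exact_iff_function_exact]
      have exact_zero : Function.Exact ((linearComplex X d h.d_comp_d).d 1 0).hom ε :=
        (coe_linearComplex_d X d h.d_comp_d 0).symm ▸ h.exact_zero
      exact exact_zero
    | n + 1 => by
      rw [quasiIsoAt_iff_exactAt' (hL := ChainComplex.exactAt_succ_single_obj ..),
        HomologicalComplex.exactAt_iff' _ (n + 2) (n + 1) n (by simp) (by simp),
        ShortComplex.ShortExact.moduleCat_exact_iff_function_exact]
      have exact_succ : Function.Exact ((linearComplex X d h.d_comp_d).d (n + 2) (n + 1)).hom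
          ((linearComplex X d h.d_comp_d).d (n + 1) n).hom := by
        rw [coe_linearComplex_d, coe_linearComplex_d]
        exact h.exact_succ n
      exact exact_succ

/-- A resolution by projective modules as a `ProjectiveResolution` in `ModuleCat R`. -/
noncomputable def projectiveResolution [∀ n, Module.Projective R (X n)] :
    ProjectiveResolution (ModuleCat.of R M) where
  complex := linearComplex X d h.d_comp_d
  projective n := (IsProjective.iff_projective (X n)).1 inferInstance
  π := h.augmentation
  quasiIso := h.augmentation_quasiIso

end IsResolution

end Resolution

section HomologyDimension

variable {k : Type} [Field k]

lemma finrank_range_prodMap {M N M' N' : Type} [AddCommGroup M] [Module k M] [AddCommGroup N]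
    [Module k N] [AddCommGroup M'] [Module k M'] [AddCommGroup N'] [Module k N'] [Module.Finite k N]
    [Module.Finite k N'] (f : M →ₗ[k] N) (g : M' →ₗ[k] N') :
    Module.finrank k (f.prodMap g).range =
      Module.finrank k f.range + Module.finrank k g.range := by
  have range_eq : (f.prodMap g).range = (f.range.subtype.prodMap g.range.subtype).range := by
    simp only [LinearMap.range_prodMap, Submodule.range_subtype]
  rw [range_eq, LinearMap.finrank_range_of_inj
    (f.range.injective_subtype.prodMap g.range.injective_subtype), Module.finrank_prod]

lemma finrank_range_comp {V M M' : Type} [AddCommGroup V] [Module k V] [AddCommGroup M]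
    [Module k M] [AddCommGroup M'] [Module k M'] {f : V →ₗ[k] M'} {g : M →ₗ[k] V}
    (hf : Function.Injective f) (hg : Function.Surjective g) :
    Module.finrank k (f ∘ₗ g).range = Module.finrank k V := by
  rw [LinearMap.range_comp_of_range_eq_top f (LinearMap.range_eq_top.2 hg),
    LinearMap.finrank_range_of_inj hf]

lemma finrank_homology_add_finrank_range (T : ShortComplex (ModuleCat.{0} k))
    [Module.Finite k T.X₂] :
    Module.finrank k T.homology + Module.finrank k T.f.hom.range + Module.finrank k T.g.hom.range
      = Module.finrank k T.X₂ := by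
  have homology_eq : Module.finrank k T.homology =
      Module.finrank k (T.g.hom.ker ⧸ T.moduleCatToCycles.range) :=
    T.moduleCatHomologyIso.toLinearEquiv.finrank_eq
  have range_eq : Module.finrank k T.moduleCatToCycles.range = Module.finrank k T.f.hom.range := by
    have : T.f.hom.range = T.moduleCatToCycles.range.map T.g.hom.ker.subtype := by
      rw [← LinearMap.range_comp]; rfl
    rw [this, Submodule.finrank_map_subtype_eq]
  have := Submodule.finrank_quotient_add_finrank T.moduleCatToCycles.range
  have := T.g.hom.finrank_range_add_finrank_ker
  omega

variable (X : ℕ → Type) [∀ n, AddCommGroup (X n)] [∀ n, Module k (X n)]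
  [∀ n, Module.Finite k (X n)] (d : ∀ n, X (n + 1) →ₗ[k] X n)
  (d_comp_d : ∀ n, d n ∘ₗ d (n + 1) = 0)

lemma finrank_homology_linearComplex_zero :
    Module.finrank k ((linearComplex X d d_comp_d).homology 0) + Module.finrank k (d 0).range
      = Module.finrank k (X 0) := by
  let C := linearComplex X d d_comp_d
  have : Module.Finite k (C.sc' 1 0 0).X₂ := inferInstanceAs (Module.Finite k (X 0))
  have finrank_add := finrank_homology_add_finrank_range (C.sc' 1 0 0)
  rw [← (C.homologyIsoSc' 1 0 0 (by simp) (by simp)).toLinearEquiv.finrank_eq] at finrank_add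
  have f_eq : (C.sc' 1 0 0).f = ModuleCat.ofHom (d 0) := linearComplex_d X d d_comp_d 0
  have g_eq : (C.sc' 1 0 0).g = 0 := C.shape _ _ (by simp)
  rwa [f_eq, g_eq, ModuleCat.hom_zero, LinearMap.range_zero, finrank_bot, add_zero] at finrank_add

lemma finrank_homology_linearComplex_succ (n : ℕ) :
    Module.finrank k ((linearComplex X d d_comp_d).homology (n + 1))
      + Module.finrank k (d (n + 1)).range + Module.finrank k (d n).range
      = Module.finrank k (X (n + 1)) := by
  let C := linearComplex X d d_comp_d
  have : Module.Finite k (C.sc' (n + 2) (n + 1) n).X₂ :=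
    inferInstanceAs (Module.Finite k (X (n + 1)))
  have finrank_add := finrank_homology_add_finrank_range (C.sc' (n + 2) (n + 1) n)
  rw [← (C.homologyIsoSc' (n + 2) (n + 1) n (by simp) (by simp)).toLinearEquiv.finrank_eq]
    at finrank_add
  have f_eq : (C.sc' (n + 2) (n + 1) n).f = ModuleCat.ofHom (d (n + 1)) :=
    linearComplex_d X d d_comp_d (n + 1)
  have g_eq : (C.sc' (n + 2) (n + 1) n).g = ModuleCat.ofHom (d n) :=
    linearComplex_d X d d_comp_d n
  rwa [f_eq, g_eq] at finrank_add

end HomologyDimension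

section Coinvariants

variable {k S M M' N N' : Type} [CommRing k] [Ring S]
  [AddCommGroup M'] [Module k M'] [Module S M'] [AddCommGroup N'] [Module k N']
  [AddCommGroup M] [Module k M] [Module S M] [AddCommGroup N] [Module k N] {P : Set (S × S)}

/-- The map `φ` exhibits `N` as the quotient of the `S`-module `M` by the elements
`p.1 • m - p.2 • m` for `p ∈ P`, that is, as the value of `coinvFunctor` at `M`. The additive
subgroup generated by these elements is also their `k`-span, since `k` is central in `S`. -/
structure IsCoinvariants (P : Set (S × S)) (φ : M →ₗ[k] N) : Prop where
  surjective : Function.Surjective φ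
  map_smul_eq : ∀ p ∈ P, ∀ m, φ (p.1 • m) = φ (p.2 • m)
  mem_closure : ∀ m, φ m = 0 →
    m ∈ AddSubgroup.closure {x | ∃ p ∈ P, ∃ n : M, x = p.1 • n - p.2 • n}

namespace IsCoinvariants

variable {φ : M →ₗ[k] N} {φ' : M' →ₗ[k] N'}

lemma prodMap (h : IsCoinvariants P φ) (h' : IsCoinvariants P φ') :
    IsCoinvariants P (φ.prodMap φ') where
  surjective := h.surjective.prodMap h'.surjective
  map_smul_eq p hp m := Prod.ext (h.map_smul_eq p hp m.1) (h'.map_smul_eq p hp m.2)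
  mem_closure := by
    let R := AddSubgroup.closure {x | ∃ p ∈ P, ∃ n : M × M', x = p.1 • n - p.2 • n}
    rintro ⟨m, m'⟩ hm
    have inl_mem : (m, (0 : M')) ∈ R := by
      refine (AddSubgroup.closure_le (R.comap (.inl M M'))).2 ?_
        (h.mem_closure m (congrArg Prod.fst hm))
      rintro _ ⟨p, hp, n, rfl⟩
      exact AddSubgroup.subset_closure ⟨p, hp, (n, 0), by simp⟩
    have inr_mem : ((0 : M), m') ∈ R := by
      refine (AddSubgroup.closure_le (R.comap (.inr M M'))).2 ?_
        (h'.mem_closure m' (congrArg Prod.snd hm))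
      rintro _ ⟨p, hp, n, rfl⟩
      exact AddSubgroup.subset_closure ⟨p, hp, (0, n), by simp⟩
    exact Prod.fst_add_snd (m, m') ▸ R.add_mem inl_mem inr_mem

variable [Algebra k S]

lemma mem_relSub (h : IsCoinvariants P φ) {m : M} (hm : φ m = 0) :
    m ∈ relSub k S P (ModuleCat.of S M) :=
  (AddSubgroup.closure_le (relSub k S P (ModuleCat.of S M)).toAddSubgroup).2
    Submodule.subset_span (h.mem_closure m hm)

variable [IsScalarTower k S M]

/-- The value of `coinvFunctor` at a module whose coinvariants are known. -/
noncomputable def coinvFunctorObjIso (h : IsCoinvariants P φ) :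
    (coinvFunctor k S P).obj (ModuleCat.of S M) ≅ ModuleCat.of k N :=
  let ψ : (ModuleCat.restrictScalars (algebraMap k S)).obj (ModuleCat.of S M) →ₗ[k] N :=
    { φ.toAddMonoidHom with
      map_smul' r m := (congrArg φ (algebraMap_smul (M := M) S r m)).trans (φ.map_smul r m) }
  have relSub_le : relSub k S P (ModuleCat.of S M) ≤ ψ.ker := by
    rw [relSub, Submodule.span_le]
    rintro _ ⟨p, hp, m, rfl⟩
    exact (map_sub φ _ _).trans (sub_eq_zero.2 (h.map_smul_eq p hp m))
  (LinearEquiv.ofBijective ((relSub k S P (ModuleCat.of S M)).liftQ ψ relSub_le)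
    ⟨LinearMap.ker_eq_bot.1 (Submodule.ker_liftQ_eq_bot _ _ _ fun _ => h.mem_relSub), fun x =>
      (h.surjective x).imp' (Submodule.Quotient.mk (M := _)) fun _ hm => hm⟩).toModuleIso

end IsCoinvariants

variable [Algebra k S] {X Y : ℕ → Type} [∀ n, AddCommGroup (X n)] [∀ n, Module k (X n)]
  [∀ n, Module S (X n)] [∀ n, IsScalarTower k S (X n)] [∀ n, Module.Projective S (X n)]
  [∀ n, AddCommGroup (Y n)] [∀ n, Module k (Y n)]
  {d : ∀ n, X (n + 1) →ₗ[S] X n} {ε : X 0 →ₗ[S] M} {d' : ∀ n, Y (n + 1) →ₗ[k] Y n}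
  {φ : ∀ n, X n →ₗ[k] Y n}

/-- Degreewise coinvariants of a projective resolution compute the derived functors of
coinvariants. -/
noncomputable def IsResolution.leftDerivedCoinvIso (h : IsResolution d ε)
    (hφ : ∀ n, IsCoinvariants P (φ n)) (comm : ∀ n x, φ n (d n x) = d' n (φ (n + 1) x))
    (d'_comp_d' : ∀ n, d' n ∘ₗ d' (n + 1) = 0) (n : ℕ) :
    ((coinvFunctor k S P).leftDerived n).obj (ModuleCat.of S M) ≅
      (linearComplex Y d' d'_comp_d').homology n :=
  h.projectiveResolution.isoLeftDerivedObj (coinvFunctor k S P) n ≪≫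
    (HomologicalComplex.homologyFunctor _ _ n).mapIso
      (HomologicalComplex.Hom.isoOfComponents (fun n => (hφ n).coinvFunctorObjIso) (by
        rintro _ n rfl
        have map_d : (coinvFunctor k S P).map ((linearComplex X d h.d_comp_d).d (n + 1) n) =
            (coinvFunctor k S P).map (ModuleCat.ofHom (d n)) :=
          congrArg (coinvFunctor k S P).map (linearComplex_d X d h.d_comp_d n)
        refine (congrArg _ (linearComplex_d Y d' d'_comp_d' n)).trans
          (Eq.trans ?_ (congrArg (· ≫ _) map_d.symm))
        exact ModuleCat.hom_ext (Submodule.linearMap_qext _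
          (LinearMap.ext fun x => (comm n x).symm))))

end Coinvariants

/-- The pair `x, y` satisfies the defining relations of `A(1)`. -/
structure IsA1Pair {B : Type} [Ring B] (x y : B) : Prop where
  x_mul_x : x * x = 0
  y_mul_y : y * y = x * (y * x)

namespace IsA1Pair

variable {B : Type} [Ring B] {x y : B}

lemma x_mul_x_assoc (h : IsA1Pair x y) (z : B) : x * (x * z) = 0 := by
  rw [← mul_assoc, h.x_mul_x, zero_mul]

lemma y_mul_y_assoc (h : IsA1Pair x y) (z : B) : y * (y * z) = x * (y * (x * z)) := by
  rw [← mul_assoc, h.y_mul_y, mul_assoc, mul_assoc]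

lemma yxyx_eq_xyxy (h : IsA1Pair x y) : y * (x * (y * x)) = x * (y * (x * y)) := by
  rw [← h.y_mul_y, h.y_mul_y_assoc]

lemma yxyx_assoc (h : IsA1Pair x y) (z : B) :
    y * (x * (y * (x * z))) = x * (y * (x * (y * z))) := by
  simpa only [mul_assoc] using congrArg (· * z) h.yxyx_eq_xyxy

lemma op (h : IsA1Pair x y) : IsA1Pair (op x) (op y) where
  x_mul_x := by rw [← op_mul, h.x_mul_x, op_zero]
  y_mul_y := by simp only [← op_mul, h.y_mul_y, mul_assoc]

end IsA1Pair

/-- The terms of the complex with differential `A1Terms.d`, which computes `Tor` over `A(1)` with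
coefficients in `M`. Degree `n + 4` is degree `n` with two more copies of `M`. -/
def A1Terms (M : Type) : ℕ → Type
  | 0 => M
  | 1 | 2 | 3 => M × M
  | n + 4 => M × M × A1Terms M n

namespace A1Terms

variable {R : Type} [Ring R] {M : Type} [AddCommGroup M] [Module R M]

instance instAddCommGroup : ∀ n, AddCommGroup (A1Terms M n)
  | 0 => inferInstanceAs (AddCommGroup M)
  | 1 | 2 | 3 => inferInstanceAs (AddCommGroup (M × M))
  | n + 4 =>
    letI := instAddCommGroup n
    inferInstanceAs (AddCommGroup (M × M × A1Terms M n))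

instance instModule : ∀ n, Module R (A1Terms M n)
  | 0 => inferInstanceAs (Module R M)
  | 1 | 2 | 3 => inferInstanceAs (Module R (M × M))
  | n + 4 =>
    letI := instModule n
    inferInstanceAs (Module R (M × M × A1Terms M n))

/-- The component of a term of the complex in its first copy of `M`. -/
def head : ∀ n, A1Terms M n →ₗ[R] M
  | 0 => LinearMap.id
  | 1 | 2 | 3 => LinearMap.fst R M M
  | n + 4 => LinearMap.fst R M (M × A1Terms M n)

/-- The differential built from endomorphisms `a` and `b`, the actions of `Sq¹` and `Sq²`. -/
def d (a b : Module.End R M) : ∀ n, A1Terms M (n + 1) →ₗ[R] A1Terms M n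
  | 0 => a.coprod b
  | 1 => (a.coprod (b * a)).prod (b ∘ₗ .snd R M M)
  | 2 => (a.coprod (b * a * b)).prod ((b * a) ∘ₗ .snd R M M)
  | 3 => (a.coprod ((b * a * b) ∘ₗ .fst R M M)).prod (a.coprod (b * a * b) ∘ₗ .snd R M (M × M))
  | n + 4 => (a.coprod ((b * a * b) ∘ₗ .fst R M (A1Terms M (n + 1)))).prod
      (((a.coprod ((b * a * b) ∘ₗ head (n + 1))).prod (d a b n ∘ₗ .snd R M (A1Terms M (n + 1)))) ∘ₗ
        .snd R M (M × A1Terms M (n + 1)))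

variable {a b : Module.End R M}

lemma bab_head_d (h : IsA1Pair a b) (n : ℕ) (r : A1Terms M (n + 1)) :
    b (a (b (head (R := R) n (d a b n r)))) = b (a (b (a (head (R := R) (n + 1) r)))) := by
  have ha u : a (a u) = 0 := LinearMap.congr_fun h.x_mul_x u
  have hb u : b (b u) = a (b (a u)) := LinearMap.congr_fun h.y_mul_y u
  match n, r with
  | 0, (u, v) =>
    change b (a (b (a u + b v))) = b (a (b (a u)))
    simp [hb, ha]
  | 1, (u, v) =>
    change b (a (b (a u + b (a v)))) = b (a (b (a u)))
    simp [hb, ha]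
  | 2, (u, v) | 3, (u, v, _) | n + 4, (u, v, r) =>
    change b (a (b (a u + b (a (b v))))) = b (a (b (a u)))
    simp [hb, ha]

lemma d_comp_d [Module (ZMod 2) M] (h : IsA1Pair a b) (n : ℕ) : d a b n ∘ₗ d a b (n + 1) = 0 := by
  have ha u : a (a u) = 0 := LinearMap.congr_fun h.x_mul_x u
  have hb u : b (b u) = a (b (a u)) := LinearMap.congr_fun h.y_mul_y u
  have hbaba u : b (a (b (a u))) = a (b (a (b u))) := LinearMap.congr_fun h.yxyx_eq_xyxy u
  have add_self (u : M) : u + u = 0 := ZModModule.add_self u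
  have fst_eq_zero u v w : a (a u + b (a (b v))) + b (a (b (a v + b (a (b w))))) = 0 := by
    simp [ha, hb, hbaba, add_self]
  induction n using Nat.strong_induction_on with | _ n ih
  ext r
  match n, r with
  | 0, (u, v) =>
    change a (a u + b (a v)) + b (b v) = 0
    simp [ha, hb, add_self]
  | 1, (u, v) =>
    refine Prod.ext (?_ : a (a u + b (a (b v))) + b (a (b (a v))) = 0) (?_ : b (b (a v)) = 0)
    · simp [ha, hbaba, add_self]
    · simp [ha, hb]
  | 2, (u, v, (w : M)) =>
    refine Prod.ext (fst_eq_zero u v w) (?_ : b (a (a v + b (a (b w)))) = 0)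
    simp [ha, hb, hbaba]
  | 3, (u, v, (w, x)) =>
    exact Prod.ext (fst_eq_zero u v w) (by
      change a (a v + b (a (b w))) + b (a (b (a w + b x))) = 0
      simp [ha, hb, hbaba, add_self])
  | n + 4, (u, v, r) =>
    refine Prod.ext (fst_eq_zero u v _) (Prod.ext ?_ (LinearMap.congr_fun (ih n (by omega)) r))
    change a (a v + b (a (b (head (R := R) (n + 2) r)))) +
      b (a (b (head (R := R) (n + 1) (d a b (n + 1) r)))) = 0
    simp [bab_head_d h, ha, hbaba, add_self]

end A1Terms

/-- Conditions on one-sided annihilators, for additive maps `a`, `b` and `ε` standing for the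
actions of `Sq¹` and `Sq²` and for an augmentation, which make the complex `A1Terms.d` acyclic. -/
structure IsAcyclicPair {M N : Type} [AddCommGroup M] [AddCommGroup N] (a b : M → M) (ε : M → N) :
    Prop where
  of_a_eq_zero : ∀ u, a u = 0 → ∃ p, a p = u
  of_b_eq_zero : ∀ v, b v = 0 → ∃ p, b (a p) = v
  of_ba_eq_zero : ∀ v, b (a v) = 0 → ∃ p q, a p + b (a (b q)) = v
  of_a_add_b_eq_zero : ∀ u v, a u + b v = 0 → ∃ p, b p = v
  of_a_add_bab_eq_zero : ∀ u v, a u + b (a (b v)) = 0 → ε v = 0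
  of_aug_eq_zero : ∀ u, ε u = 0 → ∃ p q, a p + b q = u

namespace IsAcyclicPair

variable {M M' N N' : Type} [AddCommGroup M] [AddCommGroup M'] [AddCommGroup N] [AddCommGroup N']
  {a b : M → M} {ε : M → N}

lemma of_addEquiv (h : IsAcyclicPair a b ε) (e : M ≃+ M') {a' b' : M' → M'} {ε' : M' → N'}
    (map_a : ∀ m, e (a m) = a' (e m)) (map_b : ∀ m, e (b m) = b' (e m))
    (aug_map : ∀ m, ε' (e m) = 0 ↔ ε m = 0) : IsAcyclicPair a' b' ε' where
  of_a_eq_zero := e.surjective.forall.2 fun u hu => by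
    obtain ⟨p, rfl⟩ := h.of_a_eq_zero u (by simpa [← map_a] using hu)
    exact ⟨e p, by simp [map_a]⟩
  of_b_eq_zero := e.surjective.forall.2 fun v hv => by
    obtain ⟨p, rfl⟩ := h.of_b_eq_zero v (by simpa [← map_b] using hv)
    exact ⟨e p, by simp [map_a, map_b]⟩
  of_ba_eq_zero := e.surjective.forall.2 fun v hv => by
    obtain ⟨p, q, rfl⟩ := h.of_ba_eq_zero v (by simpa [← map_a, ← map_b] using hv)
    exact ⟨e p, e q, by simp [map_a, map_b]⟩
  of_a_add_b_eq_zero := e.surjective.forall₂.2 fun u v huv => by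
    obtain ⟨p, rfl⟩ := h.of_a_add_b_eq_zero u v (by
      simpa [← map_a, ← map_b, ← map_add] using huv)
    exact ⟨e p, by simp [map_b]⟩
  of_a_add_bab_eq_zero := e.surjective.forall₂.2 fun u v huv =>
    (aug_map v).2 (h.of_a_add_bab_eq_zero u v (by
      simpa [← map_a, ← map_b, ← map_add] using huv))
  of_aug_eq_zero := e.surjective.forall.2 fun u hu => by
    obtain ⟨p, q, rfl⟩ := h.of_aug_eq_zero u ((aug_map u).1 hu)
    exact ⟨e p, e q, by simp [map_a, map_b]⟩

lemma pi (h : IsAcyclicPair a b ε) (ι : Type) :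
    IsAcyclicPair (fun (m : ι → M) i => a (m i)) (fun m i => b (m i)) (fun m i => ε (m i)) where
  of_a_eq_zero u hu := by
    choose p hp using fun i => h.of_a_eq_zero (u i) (congrFun hu i)
    exact ⟨p, funext hp⟩
  of_b_eq_zero v hv := by
    choose p hp using fun i => h.of_b_eq_zero (v i) (congrFun hv i)
    exact ⟨p, funext hp⟩
  of_ba_eq_zero v hv := by
    choose p q hpq using fun i => h.of_ba_eq_zero (v i) (congrFun hv i)
    exact ⟨p, q, funext hpq⟩
  of_a_add_b_eq_zero u v huv := by
    choose p hp using fun i => h.of_a_add_b_eq_zero (u i) (v i) (congrFun huv i)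
    exact ⟨p, funext hp⟩
  of_a_add_bab_eq_zero u v huv :=
    funext fun i => h.of_a_add_bab_eq_zero (u i) (v i) (congrFun huv i)
  of_aug_eq_zero u hu := by
    choose p q hpq using fun i => h.of_aug_eq_zero (u i) (congrFun hu i)
    exact ⟨p, q, funext hpq⟩

end IsAcyclicPair

namespace A1Terms

variable {R : Type} [Ring R] {M N : Type} [AddCommGroup M] [Module R M] [AddCommGroup N]
  [Module (ZMod 2) M] {a b : Module.End R M} {ε : M → N}

lemma exists_a_add_eq (h : IsAcyclicPair a b ε) {u w : M} (hw : a u + a w = 0) :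
    ∃ p, a p + w = u := by
  obtain ⟨p, hp⟩ := h.of_a_eq_zero (u + w) (by rw [map_add, hw])
  exact ⟨p, by rw [hp, add_assoc, ZModModule.add_self, add_zero]⟩

lemma exists_a_add_bab_eq (hab : IsA1Pair a b) (h : IsAcyclicPair a b ε) {u v w : M}
    (hu : a u + b (a (b v)) = 0) (hv : a v + b (a (b (a w))) = 0) :
    ∃ p q, a p + b (a (b q)) = u ∧ a q + b (a (b w)) = v := by
  have ha u : a (a u) = 0 := LinearMap.congr_fun hab.x_mul_x u
  have hb u : b (b u) = a (b (a u)) := LinearMap.congr_fun hab.y_mul_y u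
  have hbaba u : b (a (b (a u))) = a (b (a (b u))) := LinearMap.congr_fun hab.yxyx_eq_xyxy u
  obtain ⟨q, rfl⟩ := exists_a_add_eq h (hbaba w ▸ hv)
  obtain ⟨p, rfl⟩ := exists_a_add_eq h (u := u) (w := b (a (b q)))
    (by simpa [ha, hb, hbaba] using hu)
  exact ⟨p, q, rfl, rfl⟩

lemma exists_d_eq (hab : IsA1Pair a b) (h : IsAcyclicPair a b ε) (n : ℕ) (r : A1Terms M (n + 1))
    (hr : d a b n r = 0) : ∃ s, d a b (n + 1) s = r := by
  have ha u : a (a u) = 0 := LinearMap.congr_fun hab.x_mul_x u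
  have hb u : b (b u) = a (b (a u)) := LinearMap.congr_fun hab.y_mul_y u
  have hbaba u : b (a (b (a u))) = a (b (a (b u))) := LinearMap.congr_fun hab.yxyx_eq_xyxy u
  induction n using Nat.strong_induction_on with | _ n ih
  match n, r with
  | 0, (u, v) =>
    have hr : a u + b v = 0 := hr
    obtain ⟨q, rfl⟩ := h.of_a_add_b_eq_zero u v hr
    obtain ⟨p, rfl⟩ := exists_a_add_eq h (hb q ▸ hr)
    exact ⟨(p, q), rfl⟩
  | 1, (u, v) =>
    have hu : a u + b (a v) = 0 := congrArg Prod.fst hr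
    obtain ⟨q, rfl⟩ := h.of_b_eq_zero v (congrArg Prod.snd hr)
    obtain ⟨p, rfl⟩ := exists_a_add_eq h (hbaba q ▸ hu)
    exact ⟨(p, q), rfl⟩
  | 2, (u, v) =>
    have hu : a u + b (a (b v)) = 0 := congrArg Prod.fst hr
    obtain ⟨q, w, rfl⟩ := h.of_ba_eq_zero v (congrArg Prod.snd hr)
    obtain ⟨p, rfl⟩ := exists_a_add_eq h (u := u) (w := b (a (b q)))
      (by simpa [ha, hb, hbaba] using hu)
    exact ⟨(p, q, w), rfl⟩
  | 3, (u, v, (w : M)) =>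
    have hu : a u + b (a (b v)) = 0 := congrArg Prod.fst hr
    have hv : a v + b (a (b w)) = 0 := congrArg Prod.snd hr
    obtain ⟨x, y, rfl⟩ := h.of_aug_eq_zero w (h.of_a_add_bab_eq_zero v w hv)
    obtain ⟨p, q, rfl, rfl⟩ := exists_a_add_bab_eq hab h hu (by simpa [ha, hb] using hv)
    exact ⟨(p, q, x, y), rfl⟩
  | n + 4, (u, v, r) =>
    have hu : a u + b (a (b v)) = 0 := congrArg Prod.fst hr
    have hv : a v + b (a (b (head (R := R) (n + 1) r))) = 0 := congrArg (·.2.1) hr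
    obtain ⟨s, rfl⟩ := ih n (by omega) r (congrArg (·.2.2) hr)
    obtain ⟨p, q, rfl, rfl⟩ := exists_a_add_bab_eq hab h hu (bab_head_d hab (n + 1) s ▸ hv)
    exact ⟨(p, q, s), rfl⟩

lemma isResolution [Module R N] {ε : M →ₗ[R] N} (hab : IsA1Pair a b) (h : IsAcyclicPair a b ε)
    (surjective : Function.Surjective ε) (aug_a : ∀ m, ε (a m) = 0) (aug_b : ∀ m, ε (b m) = 0) :
    IsResolution (X := A1Terms M) (d a b) ε where
  surjective := surjective
  exact_zero m := ⟨fun hm => by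
    obtain ⟨p, q, rfl⟩ := h.of_aug_eq_zero m hm
    exact ⟨(p, q), rfl⟩, by
    rintro ⟨⟨u, v⟩, rfl⟩
    change ε (a u + b v) = 0
    rw [map_add, aug_a, aug_b, add_zero]⟩
  exact_succ n r := ⟨exists_d_eq hab h n r, by
    rintro ⟨s, rfl⟩
    exact LinearMap.congr_fun (d_comp_d hab n) s⟩

section Map

variable {k R : Type} [CommRing k] [Ring R] {M N : Type} [AddCommGroup M] [Module k M]
  [Module R M] [AddCommGroup N] [Module k N]

instance instIsScalarTower [Algebra k R] [IsScalarTower k R M] :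
    ∀ n, IsScalarTower k R (A1Terms M n)
  | 0 => inferInstanceAs (IsScalarTower k R M)
  | 1 | 2 | 3 => inferInstanceAs (IsScalarTower k R (M × M))
  | n + 4 =>
    letI := instIsScalarTower n
    inferInstanceAs (IsScalarTower k R (M × M × A1Terms M n))

instance instProjective [Module.Projective R M] : ∀ n, Module.Projective R (A1Terms M n)
  | 0 => inferInstanceAs (Module.Projective R M)
  | 1 | 2 | 3 => inferInstanceAs (Module.Projective R (M × M))
  | n + 4 =>
    letI := instProjective n
    inferInstanceAs (Module.Projective R (M × M × A1Terms M n))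

instance instFinite [Module.Finite R M] : ∀ n, Module.Finite R (A1Terms M n)
  | 0 => inferInstanceAs (Module.Finite R M)
  | 1 | 2 | 3 => inferInstanceAs (Module.Finite R (M × M))
  | n + 4 =>
    letI := instFinite n
    inferInstanceAs (Module.Finite R (M × M × A1Terms M n))

/-- The map induced on the terms of the complex by a map of coefficients. -/
def map (φ : M →ₗ[k] N) : ∀ n, A1Terms M n →ₗ[k] A1Terms N n
  | 0 => φ
  | 1 | 2 | 3 => φ.prodMap φ
  | n + 4 => φ.prodMap (φ.prodMap (map φ n))

lemma head_map (φ : M →ₗ[k] N) (n : ℕ) (r : A1Terms M n) :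
    head (R := k) n (map φ n r) = φ (head (R := R) n r) :=
  match n with
  | 0 | 1 | 2 | 3 | _ + 4 => rfl

lemma map_d {φ : M →ₗ[k] N} {a b : Module.End R M} {a' b' : Module.End k N}
    (map_a : ∀ m, φ (a m) = a' (φ m)) (map_b : ∀ m, φ (b m) = b' (φ m)) (n : ℕ)
    (r : A1Terms M (n + 1)) : map φ n (d a b n r) = d a' b' n (map φ (n + 1) r) := by
  have map_a_add_bab u v : φ (a u + b (a (b v))) = a' (φ u) + b' (a' (b' (φ v))) := by
    simp [map_a, map_b]
  induction n using Nat.strong_induction_on with | _ n ih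
  match n, r with
  | 0, (u, v) =>
    change φ (a u + b v) = a' (φ u) + b' (φ v)
    rw [map_add, map_a, map_b]
  | 1, (u, v) =>
    refine Prod.ext (?_ : φ (a u + b (a v)) = a' (φ u) + b' (a' (φ v))) (map_b v)
    simp [map_a, map_b]
  | 2, (u, v) =>
    exact Prod.ext (map_a_add_bab u v) ((map_b _).trans (congrArg b' (map_a v)))
  | 3, (u, v, (w : M)) => exact Prod.ext (map_a_add_bab u v) (map_a_add_bab v w)
  | n + 4, (u, v, r) =>
    refine Prod.ext (map_a_add_bab u v) (Prod.ext ?_ (ih n (by omega) r))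
    exact (map_a_add_bab v _).trans
      (congrArg (fun w => a' (φ v) + b' (a' (b' w))) (head_map φ (n + 1) r).symm)

lemma isCoinvariants_map {P : Set (R × R)} {φ : M →ₗ[k] N} (h : IsCoinvariants P φ) :
    ∀ n, IsCoinvariants P (map φ n)
  | 0 => h
  | 1 | 2 | 3 => h.prodMap h
  | n + 4 => h.prodMap (h.prodMap (isCoinvariants_map h n))

end Map

section ZeroProduct

variable {R M : Type} [Ring R] [AddCommGroup M] [Module R M] {a b : Module.End R M}

lemma d_one_of_mul_eq_zero (hba : b * a = 0) : d a b 1 = a.prodMap b := by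
  have hba v : b (a v) = 0 := LinearMap.congr_fun hba v
  ext ⟨u, v⟩
  refine Prod.ext (?_ : a u + b (a v) = a u) rfl
  rw [hba, add_zero]

lemma d_two_of_mul_eq_zero (hba : b * a = 0) : d a b 2 = a.prodMap 0 := by
  have hba v : b (a v) = 0 := LinearMap.congr_fun hba v
  ext ⟨u, v⟩
  refine Prod.ext (?_ : a u + b (a (b v)) = a u) (hba v)
  rw [hba, add_zero]

lemma d_three_of_mul_eq_zero (hba : b * a = 0) :
    d a b 3 = a.prodMap (a ∘ₗ LinearMap.fst R M M) := by
  have hba v : b (a v) = 0 := LinearMap.congr_fun hba v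
  ext ⟨u, v, (w : M)⟩
  refine Prod.ext (?_ : a u + b (a (b v)) = a u) (?_ : a v + b (a (b w)) = a v)
  all_goals rw [hba, add_zero]

lemma d_add_four_of_mul_eq_zero (hba : b * a = 0) (n : ℕ) :
    d a b (n + 4) = a.prodMap (a.prodMap (d a b n)) := by
  have hba v : b (a v) = 0 := LinearMap.congr_fun hba v
  ext ⟨u, v, r⟩
  refine Prod.ext (?_ : a u + b (a (b v)) = a u)
    (Prod.ext (?_ : a v + b (a (b (head (R := R) (n + 1) r))) = a v) rfl)
  all_goals rw [hba, add_zero]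

end ZeroProduct

section Finrank

variable {k M : Type} [Field k] [AddCommGroup M] [Module k M] {a b : Module.End k M}

lemma finrank_range_d_zero (hab : a.range ≤ b.range) :
    Module.finrank k (d a b 0).range = Module.finrank k b.range :=
  congrArg (fun p : Submodule k M => Module.finrank k p)
    ((LinearMap.range_coprod a b).trans (sup_eq_right.2 hab))

variable [Module.Finite k M]

lemma finrank_eq : ∀ n, Module.finrank k (A1Terms M n) =
    (n / 4 + 1 + (n + 3) / 4) * Module.finrank k M
  | 0 => (one_mul _).symm
  | 1 | 2 | 3 => Module.finrank_prod.trans (two_mul _).symm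
  | n + 4 => by
    have finrank_add_four : Module.finrank k (A1Terms M (n + 4)) =
        Module.finrank k M + (Module.finrank k M + Module.finrank k (A1Terms M n)) :=
      Module.finrank_prod.trans (congrArg _ Module.finrank_prod)
    rw [finrank_add_four, finrank_eq n, show (n + 4) / 4 = n / 4 + 1 by omega,
      show (n + 4 + 3) / 4 = (n + 3) / 4 + 1 by omega]
    ring

lemma finrank_range_d_one (hba : b * a = 0) :
    Module.finrank k (d a b 1).range = Module.finrank k a.range + Module.finrank k b.range := by
  rw [d_one_of_mul_eq_zero hba]
  exact finrank_range_prodMap a b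

lemma finrank_range_d_two (hba : b * a = 0) :
    Module.finrank k (d a b 2).range = Module.finrank k a.range := by
  rw [d_two_of_mul_eq_zero hba]
  exact (finrank_range_prodMap a 0).trans (by simp)

lemma finrank_range_d_three (hba : b * a = 0) :
    Module.finrank k (d a b 3).range = 2 * Module.finrank k a.range := by
  rw [d_three_of_mul_eq_zero hba, two_mul]
  refine (finrank_range_prodMap a (a ∘ₗ LinearMap.fst k M M)).trans ?_
  rw [LinearMap.range_comp_of_range_eq_top a (LinearMap.range_eq_top.2 LinearMap.fst_surjective)]

lemma finrank_range_d_add_four (hba : b * a = 0) (n : ℕ) :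
    Module.finrank k (d a b (n + 4)).range =
      Module.finrank k a.range + (Module.finrank k a.range + Module.finrank k (d a b n).range) := by
  rw [d_add_four_of_mul_eq_zero hba]
  exact (finrank_range_prodMap a _).trans
    (congrArg (Module.finrank k a.range + ·) (finrank_range_prodMap a (d a b n)))

end Finrank

end A1Terms

lemma smul_mem_of_adjoin_eq_top {k S M : Type} [CommSemiring k] [Semiring S] [Algebra k S]
    [AddCommMonoid M] [Module k M] [Module S M] [IsScalarTower k S M] {s : Set S}
    (hs : Algebra.adjoin k s = ⊤) {N : Submodule k M} (h : ∀ a ∈ s, ∀ m ∈ N, a • m ∈ N) (a : S)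
    {m : M} (hm : m ∈ N) : a • m ∈ N := by
  have mem_adjoin : a ∈ Algebra.adjoin k s := hs ▸ Algebra.mem_top
  induction mem_adjoin using Algebra.adjoin_induction generalizing m with
  | mem a ha => exact h a ha m hm
  | algebraMap r => exact (algebraMap_smul S r m).symm ▸ N.smul_mem r hm
  | add a b _ _ iha ihb => exact (add_smul a b m).symm ▸ N.add_mem (iha hm) (ihb hm)
  | mul a b _ _ iha ihb => exact (mul_smul a b m).symm ▸ iha (ihb hm)

namespace A1

lemma isA1Pair : IsA1Pair Sq1 Sq2 where
  x_mul_x := by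
    simpa only [Sq1, map_mul, map_zero] using RingQuot.mkAlgHom_rel (ZMod 2) A1Rel.sq1
  y_mul_y := by
    have rel := RingQuot.mkAlgHom_rel (ZMod 2) A1Rel.sq2
    simp only [map_add, map_mul, map_zero, mul_assoc] at rel
    rw [← ZModModule.sub_eq_add, sub_eq_zero] at rel
    exact rel

section Lift

variable {B : Type} [Ring B] [Algebra (ZMod 2) B] {x y : B}

/-- The universal property of `A(1)`. -/
noncomputable def lift (h : IsA1Pair x y) : A1 →ₐ[ZMod 2] B :=
  RingQuot.liftAlgHom (ZMod 2) ⟨FreeAlgebra.lift (ZMod 2) ![x, y], by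
    rintro _ _ (_ | _)
    · simp [h.x_mul_x]
    · simp [h.y_mul_y, mul_assoc, ZModModule.add_self]⟩

lemma lift_Sq1 (h : IsA1Pair x y) : lift h Sq1 = x := by
  simp [lift, Sq1]

lemma lift_Sq2 (h : IsA1Pair x y) : lift h Sq2 = y := by
  simp [lift, Sq2]

end Lift

lemma adjoin_eq_top : Algebra.adjoin (ZMod 2) {Sq1, Sq2} = ⊤ := by
  have range_ι : Set.range (FreeAlgebra.ι (ZMod 2)) =
      {FreeAlgebra.ι (ZMod 2) (0 : Fin 2), FreeAlgebra.ι (ZMod 2) 1} := by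
    ext; simp [Fin.exists_fin_two, eq_comm]
  have map_top := congrArg (Subalgebra.map (RingQuot.mkAlgHom (ZMod 2) A1Rel))
    (FreeAlgebra.adjoin_range_ι (ZMod 2) (Fin 2))
  rwa [AlgHom.map_adjoin, range_ι, Set.image_pair, Algebra.map_top,
    (AlgHom.range_eq_top _).2 (RingQuot.mkAlgHom_surjective _ _)] at map_top

/-- The words in `Sq¹` and `Sq²` forming a basis of `A(1)`. -/
noncomputable def word : Fin 8 → A1 :=
  ![1, Sq1, Sq2, Sq1 * Sq2, Sq2 * Sq1, Sq1 * (Sq2 * Sq1), Sq2 * (Sq1 * Sq2),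
    Sq1 * (Sq2 * (Sq1 * Sq2))]

/-- The element of `A(1)` with given coordinates in the basis `word`. -/
noncomputable def ofCoords : (Fin 8 → ZMod 2) →ₗ[ZMod 2] A1 :=
  Fintype.linearCombination (ZMod 2) word

lemma ofCoords_apply (c : Fin 8 → ZMod 2) :
    ofCoords c = c 0 • 1 + c 1 • Sq1 + c 2 • Sq2 + c 3 • (Sq1 * Sq2) + c 4 • (Sq2 * Sq1) +
      c 5 • (Sq1 * (Sq2 * Sq1)) + c 6 • (Sq2 * (Sq1 * Sq2)) +
      c 7 • (Sq1 * (Sq2 * (Sq1 * Sq2))) := by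
  simp [ofCoords, Fintype.linearCombination_apply, Fin.sum_univ_eight, word]

lemma ofCoords_single (i : Fin 8) : ofCoords (Pi.single i 1) = word i := by
  simp [ofCoords]

/-- Left multiplication by `Sq¹` in coordinates. -/
def leftSq1 : Module.End (ZMod 2) (Fin 8 → ZMod 2) :=
  .pi ![0, .proj 0, 0, .proj 2, 0, .proj 4, 0, .proj 6]

/-- Left multiplication by `Sq²` in coordinates. -/
def leftSq2 : Module.End (ZMod 2) (Fin 8 → ZMod 2) :=
  .pi ![0, 0, .proj 0, 0, .proj 1, .proj 2, .proj 3, .proj 5]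

/-- Right multiplication by `Sq¹` in coordinates. -/
def rightSq1 : Module.End (ZMod 2) (Fin 8 → ZMod 2) :=
  .pi ![0, .proj 0, 0, 0, .proj 2, .proj 3, 0, .proj 6]

/-- Right multiplication by `Sq²` in coordinates. -/
def rightSq2 : Module.End (ZMod 2) (Fin 8 → ZMod 2) :=
  .pi ![0, 0, .proj 0, .proj 1, 0, .proj 2, .proj 4, .proj 5]

lemma ofCoords_leftSq1 (c : Fin 8 → ZMod 2) : ofCoords (leftSq1 c) = Sq1 * ofCoords c := by
  simp [ofCoords_apply, leftSq1, mul_add, isA1Pair.x_mul_x, isA1Pair.x_mul_x_assoc]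

lemma ofCoords_leftSq2 (c : Fin 8 → ZMod 2) : ofCoords (leftSq2 c) = Sq2 * ofCoords c := by
  simp [ofCoords_apply, leftSq2, mul_add, isA1Pair.x_mul_x, isA1Pair.x_mul_x_assoc,
    isA1Pair.y_mul_y, isA1Pair.y_mul_y_assoc, isA1Pair.yxyx_eq_xyxy, isA1Pair.yxyx_assoc]

lemma ofCoords_rightSq1 (c : Fin 8 → ZMod 2) : ofCoords (rightSq1 c) = ofCoords c * Sq1 := by
  simp [ofCoords_apply, rightSq1, add_mul, mul_assoc, isA1Pair.x_mul_x, isA1Pair.x_mul_x_assoc,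
    isA1Pair.yxyx_eq_xyxy]

lemma ofCoords_rightSq2 (c : Fin 8 → ZMod 2) : ofCoords (rightSq2 c) = ofCoords c * Sq2 := by
  simp [ofCoords_apply, rightSq2, add_mul, mul_assoc, isA1Pair.x_mul_x_assoc, isA1Pair.y_mul_y]

lemma isA1Pair_left : IsA1Pair leftSq1 leftSq2 where
  x_mul_x := by ext i j; fin_cases j <;> simp [leftSq1]
  y_mul_y := by ext i j; fin_cases j <;> simp [leftSq1, leftSq2]

lemma lift_ofCoords (c : Fin 8 → ZMod 2) :
    lift isA1Pair_left (ofCoords c) (Pi.single 0 1) = c := by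
  simp only [ofCoords_apply, map_add, map_smul, map_mul, lift_Sq1, lift_Sq2, map_one]
  ext i
  fin_cases i <;> simp [leftSq1, leftSq2]

lemma ofCoords_injective : Function.Injective ofCoords := fun c c' h => by
  rw [← lift_ofCoords c, h, lift_ofCoords]

lemma ofCoords_surjective : Function.Surjective ofCoords := fun a => by
  have one_mem : (1 : A1) ∈ ofCoords.range := ⟨Pi.single 0 1, ofCoords_single 0⟩
  have smul_mem := smul_mem_of_adjoin_eq_top (N := ofCoords.range) adjoin_eq_top
    (by
      rintro _ (rfl | rfl) _ ⟨c, rfl⟩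
      exacts [⟨_, ofCoords_leftSq1 c⟩, ⟨_, ofCoords_leftSq2 c⟩])
    a one_mem
  rwa [smul_eq_mul, mul_one] at smul_mem

/-- The coordinates on `A(1)` in the basis `word`, as an isomorphism onto `A(1)`. -/
noncomputable def coordsEquiv : (Fin 8 → ZMod 2) ≃ₗ[ZMod 2] A1 :=
  .ofBijective ofCoords ⟨ofCoords_injective, ofCoords_surjective⟩

instance : Module.Finite (ZMod 2) A1 := .equiv coordsEquiv

lemma finrank_eq_eight : Module.finrank (ZMod 2) A1 = 8 := by
  simp [← coordsEquiv.finrank_eq]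

lemma isAcyclicPair_right : IsAcyclicPair rightSq1 rightSq2 (fun c : Fin 8 → ZMod 2 => c 0) where
  of_a_eq_zero u hu := by
    refine ⟨![u 1, 0, u 4, u 5, 0, 0, u 7, 0], ?_⟩
    simp_all [funext_iff, Fin.forall_fin_succ, rightSq1]
  of_b_eq_zero v hv := by
    refine ⟨![v 3, 0, v 6, v 7, 0, 0, 0, 0], ?_⟩
    simp_all [funext_iff, Fin.forall_fin_succ, rightSq1, rightSq2]
  of_ba_eq_zero v hv := by
    refine ⟨![v 1, 0, v 4, v 5, 0, 0, v 7, 0], ![v 6, 0, 0, 0, 0, 0, 0, 0], ?_⟩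
    simp_all [funext_iff, Fin.forall_fin_succ, rightSq1, rightSq2]
  of_a_add_b_eq_zero u v huv := by
    refine ⟨![v 2, v 3, v 5, 0, v 6, v 7, 0, 0], ?_⟩
    simp_all [funext_iff, Fin.forall_fin_succ, rightSq1, rightSq2]
  of_a_add_bab_eq_zero u v huv := by
    simpa [rightSq1, rightSq2] using congrFun huv 6
  of_aug_eq_zero u hu := by
    refine ⟨![u 1, 0, u 4, u 5, 0, 0, 0, 0], ![u 2, u 3, 0, 0, u 6, u 7, 0, 0], ?_⟩
    simp_all [funext_iff, Fin.forall_fin_succ, rightSq1, rightSq2]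

end A1

section Enveloping

variable {k A : Type} [CommRing k] [Ring A] [Algebra k A]

/-- The multiplication `p ⊗ q ↦ q p`, which exhibits `A` as the coinvariants of the free bimodule
`A ⊗ Aᵐᵒᵖ` of rank one. -/
noncomputable def cyclicMul : A ⊗[k] Aᵐᵒᵖ →ₗ[k] A :=
  TensorProduct.lift ((LinearMap.mul k A).flip.compl₂ (opLinearEquiv k).symm.toLinearMap)

lemma cyclicMul_tmul (p : A) (q : Aᵐᵒᵖ) : cyclicMul (p ⊗ₜ[k] q) = unop q * p := rfl

lemma cyclicMul_mul_tmul (s : A ⊗[k] Aᵐᵒᵖ) (a : A) (b : Aᵐᵒᵖ) :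
    cyclicMul (s * a ⊗ₜ[k] b) = unop b * cyclicMul s * a := by
  induction s using TensorProduct.induction_on with
  | zero => simp
  | add s t hs ht => simp only [add_mul, map_add, hs, ht, mul_add]
  | tmul p q => simp [cyclicMul_tmul, mul_assoc]

lemma isCoinvariants_cyclicMul : IsCoinvariants
    {p | ∃ a : A, p = (a ⊗ₜ[k] (1 : Aᵐᵒᵖ), (1 : A) ⊗ₜ[k] op a)} (cyclicMul (k := k) (A := A)) where
  surjective a := ⟨a ⊗ₜ 1, one_mul a⟩
  map_smul_eq := by
    rintro _ ⟨a, rfl⟩ s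
    induction s using TensorProduct.induction_on with
    | zero => simp
    | add s t hs ht => simp only [smul_add, map_add, hs, ht]
    | tmul p q => simp [cyclicMul_tmul, mul_assoc]
  mem_closure s hs := by
    have sub_mem (s : A ⊗[k] Aᵐᵒᵖ) : s - cyclicMul s ⊗ₜ 1 ∈ AddSubgroup.closure
        {x | ∃ p ∈ {p | ∃ a : A, p = (a ⊗ₜ[k] (1 : Aᵐᵒᵖ), (1 : A) ⊗ₜ[k] op a)},
          ∃ n, x = p.1 • n - p.2 • n} := by
      induction s using TensorProduct.induction_on with
      | zero => simp
      | add s t hs ht =>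
        rw [map_add, add_tmul, add_sub_add_comm]
        exact add_mem hs ht
      | tmul p q =>
        rw [← neg_sub]
        refine neg_mem (AddSubgroup.subset_closure ⟨_, ⟨unop q, rfl⟩, p ⊗ₜ 1, ?_⟩)
        simp [cyclicMul_tmul]
    simpa [hs] using sub_mem s

lemma IsCoinvariants.compEquiv {S M N N' : Type} [Ring S] [AddCommGroup M] [Module k M]
    [Module S M] [AddCommGroup N] [Module k N] [AddCommGroup N'] [Module k N']
    {P : Set (S × S)} {φ : M →ₗ[k] N} (h : IsCoinvariants P φ) (e : N ≃ₗ[k] N') :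
    IsCoinvariants P (e.toLinearMap ∘ₗ φ) where
  surjective := e.surjective.comp h.surjective
  map_smul_eq p hp m := congrArg e (h.map_smul_eq p hp m)
  mem_closure m hm := h.mem_closure m (e.map_eq_zero_iff.1 hm)

end Enveloping

namespace A1

section ChangeOfRings

variable {S : Type} [Ring S] [Algebra (ZMod 2) S] (f : A1 →ₐ[ZMod 2] S) {ι : Type} [Fintype ι]

/-- Combinations of a family `w` with coefficients in `A(1)`, given by their coordinates and acting
on the right of `S` along `f`. When it is bijective, `S` is free on `w` as a right `A(1)`-module. -/
noncomputable def rightCombination (w : ι → S) : (ι → Fin 8 → ZMod 2) →ₗ[ZMod 2] S :=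
  ∑ i, LinearMap.mulLeft (ZMod 2) (w i) ∘ₗ f.toLinearMap ∘ₗ ofCoords ∘ₗ LinearMap.proj i

lemma rightCombination_apply (w : ι → S) (c : ι → Fin 8 → ZMod 2) :
    rightCombination f w c = ∑ i, w i * f (ofCoords (c i)) := by
  simp [rightCombination]

lemma rightCombination_rightSq1 (w : ι → S) (c : ι → Fin 8 → ZMod 2) :
    rightCombination f w (fun i => rightSq1 (c i)) = rightCombination f w c * f Sq1 := by
  simp only [rightCombination_apply, ofCoords_rightSq1, map_mul, Finset.sum_mul, mul_assoc]

lemma rightCombination_rightSq2 (w : ι → S) (c : ι → Fin 8 → ZMod 2) :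
    rightCombination f w (fun i => rightSq2 (c i)) = rightCombination f w c * f Sq2 := by
  simp only [rightCombination_apply, ofCoords_rightSq2, map_mul, Finset.sum_mul, mul_assoc]

variable {f} in
lemma rightCombination_bijective {w : ι → S} [Module.Finite (ZMod 2) S]
    (finrank_eq : Module.finrank (ZMod 2) S = Fintype.card ι * 8)
    (surjective : Function.Surjective (rightCombination f w)) :
    Function.Bijective (rightCombination f w) :=
  ⟨(LinearMap.injective_iff_surjective_of_finrank_eq_finrank
    (by simp [finrank_eq, Module.finrank_pi_fintype])).2 surjective, surjective⟩

/-- The endomorphism of the left module `S` given by right multiplication by `f a`. -/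
def mulRightMap (a : A1) : Module.End S S := LinearMap.toSpanSingleton S S (f a)

lemma isA1Pair_mulRightMap : IsA1Pair (mulRightMap f Sq1) (mulRightMap f Sq2) where
  x_mul_x := by ext; simp [mulRightMap, ← map_mul, isA1Pair.x_mul_x]
  y_mul_y := by ext; simp [mulRightMap, ← map_mul, isA1Pair.y_mul_y, mul_assoc]

variable {f} {N : Type} [AddCommGroup N] [Module (ZMod 2) N] [Module S N] {ε : S →ₗ[S] N}

lemma map_mul_map_ofCoords (aug_Sq1 : ε (f Sq1) = 0) (aug_Sq2 : ε (f Sq2) = 0) (s : S)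
    (c : Fin 8 → ZMod 2) : ε (s * f (ofCoords c)) = c 0 • ε s := by
  have aug_mul_Sq1 s : ε (s * f Sq1) = 0 := by rw [← smul_eq_mul, map_smul, aug_Sq1, smul_zero]
  have aug_mul_Sq2 s : ε (s * f Sq2) = 0 := by rw [← smul_eq_mul, map_smul, aug_Sq2, smul_zero]
  simp [ofCoords_apply, mul_add, ← mul_assoc, ZMod.map_smul ε, aug_mul_Sq1, aug_mul_Sq2]

lemma isAcyclicPair_mulRightMap {w : ι → S} (bijective : Function.Bijective (rightCombination f w))
    (aug_Sq1 : ε (f Sq1) = 0) (aug_Sq2 : ε (f Sq2) = 0)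
    (linearIndependent : LinearIndependent (ZMod 2) (ε ∘ w)) :
    IsAcyclicPair (mulRightMap f Sq1) (mulRightMap f Sq2) ε :=
  (isAcyclicPair_right.pi ι).of_addEquiv (.ofBijective (rightCombination f w) bijective)
    (rightCombination_rightSq1 f w) (rightCombination_rightSq2 f w) fun c => by
      have aug_eq : ε (rightCombination f w c) = ∑ i, c i 0 • ε (w i) := by
        simp only [rightCombination_apply, map_sum, map_mul_map_ofCoords aug_Sq1 aug_Sq2]
      refine ⟨fun h => funext ?_, fun h => ?_⟩
      · exact Fintype.linearIndependent_iff.1 linearIndependent _ (aug_eq ▸ h)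
      · exact aug_eq.trans (Finset.sum_eq_zero fun i _ => by rw [congrFun h i]; exact zero_smul _ _)

lemma isResolution_mulRightMap {w : ι → S} (bijective : Function.Bijective (rightCombination f w))
    (surjective : Function.Surjective ε) (aug_Sq1 : ε (f Sq1) = 0) (aug_Sq2 : ε (f Sq2) = 0)
    (linearIndependent : LinearIndependent (ZMod 2) (ε ∘ w)) :
    IsResolution (X := A1Terms S) (A1Terms.d (mulRightMap f Sq1) (mulRightMap f Sq2)) ε :=
  A1Terms.isResolution (isA1Pair_mulRightMap f)
    (isAcyclicPair_mulRightMap bijective aug_Sq1 aug_Sq2 linearIndependent) surjective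
    (fun s => by rw [mulRightMap, LinearMap.toSpanSingleton_apply, map_smul, aug_Sq1, smul_zero])
    (fun s => by rw [mulRightMap, LinearMap.toSpanSingleton_apply, map_smul, aug_Sq2, smul_zero])

end ChangeOfRings

/-- The enveloping algebra of `A(1)`. -/
abbrev Enveloping : Type := A1 ⊗[ZMod 2] A1ᵐᵒᵖ

lemma Enveloping.add_self (s : Enveloping) : s + s = 0 := ZModModule.add_self s

lemma isA1Pair_adjoint : IsA1Pair (Sq1 ⊗ₜ 1 + 1 ⊗ₜ op Sq1 : Enveloping)
    (Sq2 ⊗ₜ 1 + Sq1 ⊗ₜ op Sq1 + 1 ⊗ₜ op Sq2) where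
  x_mul_x := by
    simp [add_mul, mul_add, ← op_mul, isA1Pair.x_mul_x, Enveloping.add_self]
  y_mul_y := by
    simp only [add_mul, mul_add, Algebra.TensorProduct.tmul_mul_tmul, mul_one, one_mul,
      isA1Pair.x_mul_x, isA1Pair.y_mul_y, isA1Pair.op.x_mul_x, isA1Pair.op.y_mul_y, zero_tmul,
      tmul_zero, mul_zero]
    rw [← sub_eq_zero]
    abel_nf
    simp only [two_zsmul, Enveloping.add_self]

/-- The composite of the coproduct with the antipode in the second factor. Restricting a bimodule
along it gives the adjoint action of `A(1)`. -/
noncomputable def adjointHom : A1 →ₐ[ZMod 2] Enveloping := lift isA1Pair_adjoint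

lemma adjointHom_Sq1 : adjointHom Sq1 = Sq1 ⊗ₜ 1 + 1 ⊗ₜ op Sq1 := lift_Sq1 _

lemma adjointHom_Sq2 :
    adjointHom Sq2 = Sq2 ⊗ₜ 1 + Sq1 ⊗ₜ op Sq1 + 1 ⊗ₜ op Sq2 := lift_Sq2 _

lemma Sq1_tmul_one : (Sq1 ⊗ₜ 1 : Enveloping) = adjointHom Sq1 + 1 ⊗ₜ op Sq1 := by
  rw [adjointHom_Sq1, add_assoc, Enveloping.add_self, add_zero]

lemma Sq2_tmul_one : (Sq2 ⊗ₜ 1 : Enveloping) =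
    adjointHom Sq2 + 1 ⊗ₜ op Sq1 * adjointHom Sq1 + 1 ⊗ₜ op Sq2 := by
  simp only [adjointHom_Sq2, adjointHom_Sq1, mul_add, Algebra.TensorProduct.tmul_mul_tmul, one_mul,
    mul_one, ← op_mul, isA1Pair.x_mul_x, op_zero, tmul_zero, add_zero]
  calc (Sq2 ⊗ₜ 1 : Enveloping)
      = Sq2 ⊗ₜ 1 + (Sq1 ⊗ₜ op Sq1 + Sq1 ⊗ₜ op Sq1) + (1 ⊗ₜ op Sq2 + 1 ⊗ₜ op Sq2) := by
        simp only [Enveloping.add_self, add_zero]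
    _ = _ := by abel

/-- The elements of the enveloping algebra forming a basis of it as a right module over `A(1)`
along `adjointHom`. -/
noncomputable def opWord (i : Fin 8) : Enveloping := 1 ⊗ₜ op (word i)

lemma one_tmul_mul_adjointHom_mem_range (a v : A1) :
    1 ⊗ₜ op a * adjointHom v ∈ (rightCombination adjointHom opWord).range := by
  obtain ⟨c, rfl⟩ := ofCoords_surjective a
  obtain ⟨v, rfl⟩ := ofCoords_surjective v
  refine ⟨fun i => c i • v, ?_⟩
  simp only [rightCombination_apply, opWord, map_smul, mul_smul_comm]
  generalize adjointHom (ofCoords v) = s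
  simp only [ofCoords, Fintype.linearCombination_apply, Finset.op_sum, op_smul, tmul_sum,
    tmul_smul, Finset.sum_mul, smul_mul_assoc]

lemma tmul_mul_adjointHom (a b v : A1) :
    a ⊗ₜ op b * adjointHom v = 1 ⊗ₜ op b * (a ⊗ₜ 1 * adjointHom v) := by
  rw [← mul_assoc, Algebra.TensorProduct.tmul_mul_tmul, one_mul, mul_one]

lemma one_tmul_mul_one_tmul_mul_adjointHom (a b u v : A1) :
    1 ⊗ₜ op b * (1 ⊗ₜ op a * adjointHom u * adjointHom v) =
      1 ⊗ₜ op (a * b) * adjointHom (u * v) := by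
  rw [mul_assoc, ← map_mul, ← mul_assoc, Algebra.TensorProduct.tmul_mul_tmul, mul_one, ← op_mul]

lemma rightCombination_opWord_surjective :
    Function.Surjective (rightCombination adjointHom opWord) := by
  have smul_mem : ∀ a ∈ ({Sq1, Sq2} : Set A1), ∀ s ∈ (rightCombination adjointHom opWord).range,
      a • s ∈ (rightCombination adjointHom opWord).range := by
    rintro a ha _ ⟨c, rfl⟩
    rw [rightCombination_apply, Finset.smul_sum]
    refine sum_mem fun i _ => ?_
    have smul_eq (a : A1) : a • (opWord i * adjointHom (ofCoords (c i))) =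
        1 ⊗ₜ op (word i) * (a ⊗ₜ 1 * adjointHom (ofCoords (c i))) := by
      rw [← tmul_mul_adjointHom, ← smul_mul_assoc, opWord, smul_tmul', smul_eq_mul, mul_one]
    have mem (a b : A1) : 1 ⊗ₜ op (word i) * (1 ⊗ₜ op a * adjointHom b *
        adjointHom (ofCoords (c i))) ∈ (rightCombination adjointHom opWord).range := by
      rw [one_tmul_mul_one_tmul_mul_adjointHom]
      exact one_tmul_mul_adjointHom_mem_range _ _
    obtain rfl | rfl := ha
    · simpa [smul_eq, Sq1_tmul_one, add_mul, mul_add, ← Algebra.TensorProduct.one_def]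
        using add_mem (mem 1 Sq1) (mem Sq1 1)
    · simpa [smul_eq, Sq2_tmul_one, add_mul, mul_add, ← Algebra.TensorProduct.one_def]
        using add_mem (add_mem (mem 1 Sq2) (mem Sq1 Sq1)) (mem Sq2 1)
  rw [← LinearMap.range_eq_top, eq_top_iff, ← TensorProduct.span_tmul_eq_top, Submodule.span_le]
  rintro _ ⟨p, q, rfl⟩
  have := smul_mem_of_adjoin_eq_top adjoin_eq_top smul_mem p
    (one_tmul_mul_adjointHom_mem_range (unop q) 1)
  simpa [smul_tmul'] using this

lemma rightCombination_opWord_bijective :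
    Function.Bijective (rightCombination adjointHom opWord) :=
  rightCombination_bijective (by
    rw [Module.finrank_tensorProduct, ← (opLinearEquiv (ZMod 2)).finrank_eq, finrank_eq_eight,
      Fintype.card_fin]) rightCombination_opWord_surjective

section Augmentation

attribute [local instance] TensorProduct.Algebra.module

/-- The augmentation `p ⊗ q ↦ p q` of the enveloping algebra. -/
noncomputable def augmentation : Enveloping →ₗ[Enveloping] A1 := .toSpanSingleton _ _ 1

lemma augmentation_tmul (p : A1) (q : A1ᵐᵒᵖ) : augmentation (p ⊗ₜ q) = p * unop q := by
  simp [augmentation, TensorProduct.Algebra.smul_def]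

lemma augmentation_adjointHom_Sq1 : augmentation (adjointHom Sq1) = 0 := by
  simp [adjointHom_Sq1, augmentation_tmul, ZModModule.add_self]

lemma augmentation_adjointHom_Sq2 : augmentation (adjointHom Sq2) = 0 := by
  simp [adjointHom_Sq2, augmentation_tmul, ZModModule.add_self, isA1Pair.x_mul_x]

lemma augmentation_comp_opWord : augmentation ∘ opWord = word :=
  funext fun i => (augmentation_tmul 1 (op (word i))).trans (one_mul _)

lemma isResolution_augmentation : IsResolution (R := Enveloping) (X := A1Terms Enveloping)
    (A1Terms.d (mulRightMap adjointHom Sq1) (mulRightMap adjointHom Sq2)) augmentation :=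
  isResolution_mulRightMap rightCombination_opWord_bijective
    (fun a => ⟨a ⊗ₜ 1, (augmentation_tmul a 1).trans (mul_one a)⟩)
    augmentation_adjointHom_Sq1 augmentation_adjointHom_Sq2
    (augmentation_comp_opWord ▸
      linearIndependent_iff_injective_fintypeLinearCombination.2 ofCoords_injective)

end Augmentation

/-- The adjoint action `c ↦ Sq¹ c + c Sq¹` in coordinates. -/
def adSq1 : Module.End (ZMod 2) (Fin 8 → ZMod 2) := leftSq1 + rightSq1

/-- The adjoint action `c ↦ Sq² c + Sq¹ c Sq¹ + c Sq²` in coordinates. -/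
def adSq2 : Module.End (ZMod 2) (Fin 8 → ZMod 2) := leftSq2 + leftSq1 * rightSq1 + rightSq2

lemma adSq1_apply (c : Fin 8 → ZMod 2) : adSq1 c = ![0, 0, 0, c 2, c 2, c 4 + c 3, 0, 0] := by
  simp [adSq1, leftSq1, rightSq1, funext_iff, Fin.forall_fin_succ, ZModModule.add_self]

lemma adSq2_apply (c : Fin 8 → ZMod 2) : adSq2 c = ![0, 0, 0, c 1, c 1, c 2, c 3 + c 4, 0] := by
  ext i
  fin_cases i <;> simp [adSq2, leftSq1, rightSq1, leftSq2, rightSq2, ZModModule.add_self]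

lemma adSq2_mul_adSq1 : adSq2 * adSq1 = 0 :=
  LinearMap.ext fun c => by simp [adSq1_apply, adSq2_apply, ZModModule.add_self]

lemma isA1Pair_ad : IsA1Pair adSq1 adSq2 where
  x_mul_x := LinearMap.ext fun c => by simp [adSq1_apply, ZModModule.add_self]
  y_mul_y := LinearMap.ext fun c => by simp [adSq1_apply, adSq2_apply, ZModModule.add_self]

lemma range_adSq1_le_range_adSq2 : adSq1.range ≤ adSq2.range := by
  rintro _ ⟨c, rfl⟩
  exact ⟨![0, c 2, c 4 + c 3, 0, 0, 0, 0, 0], by simp [adSq1_apply, adSq2_apply]⟩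

/-- The isomorphism of the coinvariants of the free bimodule of rank one with the coordinates. -/
noncomputable def cyclicCoords : Enveloping →ₗ[ZMod 2] Fin 8 → ZMod 2 :=
  coordsEquiv.symm.toLinearMap ∘ₗ cyclicMul

lemma ofCoords_cyclicCoords (s : Enveloping) : ofCoords (cyclicCoords s) = cyclicMul s :=
  coordsEquiv.apply_symm_apply _

lemma cyclicCoords_mulRightMap_Sq1 (s : Enveloping) :
    cyclicCoords (mulRightMap adjointHom Sq1 s) = adSq1 (cyclicCoords s) := by
  apply ofCoords_injective
  simp [adSq1, ofCoords_leftSq1, ofCoords_rightSq1, ofCoords_cyclicCoords, mulRightMap,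
    adjointHom_Sq1, mul_add, cyclicMul_mul_tmul, add_comm]

lemma cyclicCoords_mulRightMap_Sq2 (s : Enveloping) :
    cyclicCoords (mulRightMap adjointHom Sq2 s) = adSq2 (cyclicCoords s) := by
  apply ofCoords_injective
  simp only [mulRightMap, adjointHom_Sq2, LinearMap.toSpanSingleton_apply, smul_eq_mul, mul_add,
    map_add, ofCoords_cyclicCoords, cyclicMul_mul_tmul, unop_one, one_mul, unop_op, mul_assoc,
    mul_one, adSq2, LinearMap.add_apply, Module.End.mul_apply, ofCoords_leftSq2, ofCoords_leftSq1,
    ofCoords_rightSq1, ofCoords_rightSq2]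
  abel

/-- The Hochschild homology of `A(1)` as the homology of an explicit complex of vector spaces. -/
noncomputable def hochschildHomologyIso (n : ℕ) :
    HochschildHomology (ZMod 2) A1 n ≅ (linearComplex (A1Terms (Fin 8 → ZMod 2))
      (A1Terms.d adSq1 adSq2) (A1Terms.d_comp_d isA1Pair_ad)).homology n :=
  letI : Module Enveloping A1 := TensorProduct.Algebra.module
  isResolution_augmentation.leftDerivedCoinvIso
    (A1Terms.isCoinvariants_map (isCoinvariants_cyclicMul.compEquiv coordsEquiv.symm))
    (A1Terms.map_d cyclicCoords_mulRightMap_Sq1 cyclicCoords_mulRightMap_Sq2) _ n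

lemma finrank_range_adSq1 : Module.finrank (ZMod 2) adSq1.range = 2 := by
  let f : (Fin 2 → ZMod 2) →ₗ[ZMod 2] Fin 8 → ZMod 2 :=
    .pi ![0, 0, 0, .proj 0, .proj 0, .proj 1, 0, 0]
  let g : (Fin 8 → ZMod 2) →ₗ[ZMod 2] Fin 2 → ZMod 2 := .pi ![.proj 2, .proj 4 + .proj 3]
  have hf : Function.Injective f := fun u v huv => by
    ext i
    fin_cases i
    exacts [congrFun huv 3, congrFun huv 5]
  have hg : Function.Surjective g := fun u => ⟨![0, 0, u 0, u 1, 0, 0, 0, 0], by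
    ext i
    fin_cases i <;> simp [g]⟩
  have eq_comp : adSq1 = f ∘ₗ g := LinearMap.ext fun c => by
    rw [adSq1_apply]
    ext i
    fin_cases i <;> rfl
  rw [eq_comp, finrank_range_comp hf hg, Module.finrank_fin_fun]

lemma finrank_range_adSq2 : Module.finrank (ZMod 2) adSq2.range = 3 := by
  let f : (Fin 3 → ZMod 2) →ₗ[ZMod 2] Fin 8 → ZMod 2 :=
    .pi ![0, 0, 0, .proj 0, .proj 0, .proj 1, .proj 2, 0]
  let g : (Fin 8 → ZMod 2) →ₗ[ZMod 2] Fin 3 → ZMod 2 := .pi ![.proj 1, .proj 2, .proj 3 + .proj 4]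
  have hf : Function.Injective f := fun u v huv => by
    ext i
    fin_cases i
    exacts [congrFun huv 3, congrFun huv 5, congrFun huv 6]
  have hg : Function.Surjective g := fun u => ⟨![0, u 0, u 1, u 2, 0, 0, 0, 0], by
    ext i
    fin_cases i <;> simp [g]⟩
  have eq_comp : adSq2 = f ∘ₗ g := LinearMap.ext fun c => by
    rw [adSq2_apply]
    ext i
    fin_cases i <;> rfl
  rw [eq_comp, finrank_range_comp hf hg, Module.finrank_fin_fun]

lemma finrank_range_d_ad (n : ℕ) : Module.finrank (ZMod 2) (A1Terms.d adSq1 adSq2 n).range =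
    n + if n % 4 = 0 then 3 else if n % 4 = 1 then 4 else if n % 4 = 2 then 0 else 1 := by
  induction n using Nat.strong_induction_on with | _ n ih
  match n with
  | 0 => rw [A1Terms.finrank_range_d_zero range_adSq1_le_range_adSq2, finrank_range_adSq2]; rfl
  | 1 =>
    rw [A1Terms.finrank_range_d_one adSq2_mul_adSq1, finrank_range_adSq1, finrank_range_adSq2]
    rfl
  | 2 => rw [A1Terms.finrank_range_d_two adSq2_mul_adSq1, finrank_range_adSq1]; rfl
  | 3 => rw [A1Terms.finrank_range_d_three adSq2_mul_adSq1, finrank_range_adSq1]; rfl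
  | n + 4 =>
    rw [A1Terms.finrank_range_d_add_four adSq2_mul_adSq1, finrank_range_adSq1, ih n (by omega),
      Nat.add_mod_right]
    omega

lemma finrank_A1Terms_coords (n : ℕ) : Module.finrank (ZMod 2) (A1Terms (Fin 8 → ZMod 2) n) =
    (n / 4 + 1 + (n + 3) / 4) * 8 := by
  rw [A1Terms.finrank_eq, Module.finrank_fin_fun]

end A1

/-- The `F₂`-vector space dimension of the `n`-th Hochschild homology of `A(1)`:
`2n + 5` if `n` is even, `2n + 6` if `n ≡ 1 (mod 4)`, and `2n + 4` if `n ≡ 3 (mod 4)`. -/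
theorem hochschildHomology_A1_dim (n : ℕ) :
    Module.finrank (ZMod 2) (HochschildHomology (ZMod 2) A1 n) =
      if n % 2 = 0 then 2 * n + 5
      else if n % 4 = 1 then 2 * n + 6
      else 2 * n + 4 := by
  rw [(A1.hochschildHomologyIso n).toLinearEquiv.finrank_eq]
  have d_comp_d := A1Terms.d_comp_d A1.isA1Pair_ad
  have finrank_terms := A1.finrank_A1Terms_coords n
  have finrank_range := A1.finrank_range_d_ad n
  cases n with
  | zero =>
    have := finrank_homology_linearComplex_zero _ _ d_comp_d
    split_ifs at * <;> omega
  | succ n =>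
    have := finrank_homology_linearComplex_succ _ _ d_comp_d n
    have finrank_range_prev := A1.finrank_range_d_ad n
    split_ifs at * <;> omega
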